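/- arXiv:1808.01289 — 2 statements merged into one kernel-verified Lean document; each statement's English description precedes it below -/
import Mathlib

section
/- Let p be a prime and N ≥ 2. Let B be the coordinate ring of GL_N over R₂, i.e. the localization of the polynomial ring R₂[x_{ij} : 1 ≤ i,j ≤ N] away from det(x), and let h ∈ B be an element with h ∉ pB. Let A be the localization of B away from h, let X = (X_{ij}) denote the image in A of the coordinate matrix (an invertible matrix over A), and let d : A → Ω_{A/R₂} be the universal derivation into the module of Kähler differentials. Then there exist NO ring endomorphism φ : A → A and matrix λ = (λ_{(i,j),(k,l)}) of size N²×N² with entries in R₂ such that simultaneously: (a) φ(r·1) = σ(r)·1 for every r ∈ R₂; (b) φ(a) − a^p ∈ pA for every a ∈ A; and (c) for all i,j, one has Σ_k (φ(X)⁻¹)_{ik} · d(φ(X_{kj})) = Σ_{k,l} (p·λ_{(i,j),(k,l)}) · ( Σ_m (X⁻¹)_{km} · d(X_{ml}) ) in Ω_{A/R₂}, where φ(X) is the (invertible) matrix with entries φ(X_{ij}). (This is the mod p² formulation of the statement that no nonempty open subset of GL_N over R admits a Frobenius lift on its p-adic completion that is Lie invariant mod p.) -/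
open MvPolynomial

set_option synthInstance.maxHeartbeats 2000000
set_option maxHeartbeats 2000000

/-- `R₂ = W(k)/p²W(k)`. -/
abbrev Rtwo (p : ℕ) [Fact p.Prime] (k : Type) [CommRing k] : Type :=
  WittVector p k ⧸ Ideal.span {((p : WittVector p k)) ^ 2}

/-- The endomorphism `σ` of `R₂` induced by the Witt vector Frobenius. -/
noncomputable def sigmaTwo (p : ℕ) [Fact p.Prime] (k : Type) [CommRing k] :
    Rtwo p k →+* Rtwo p k :=
  Ideal.quotientMap _ WittVector.frobenius (by
    rw [Ideal.span_singleton_le_iff_mem, Ideal.mem_comap, map_pow, map_natCast]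
    exact Ideal.subset_span rfl)

/-- `B`, the coordinate ring of `GL_N` over `R₂`: the localization of the polynomial ring
`R₂[x_{ij}]` away from `det x`. -/
abbrev glCoordRing (p : ℕ) [Fact p.Prime] (k : Type) [CommRing k] (N : ℕ) : Type :=
  Localization.Away
    ((Matrix.of fun i j : Fin N =>
        (X (i, j) : MvPolynomial (Fin N × Fin N) (Rtwo p k))).det)

/-- The image in `A` (the localization of `B` away from `h`) of the coordinate matrix. -/
noncomputable def glCoordMatrix (p : ℕ) [Fact p.Prime] (k : Type) [CommRing k] (N : ℕ)
    (h : glCoordRing p k N) : Matrix (Fin N) (Fin N) (Localization.Away h) :=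
  Matrix.of fun i j =>
    algebraMap (glCoordRing p k N) (Localization.Away h)
      (algebraMap (MvPolynomial (Fin N × Fin N) (Rtwo p k)) (glCoordRing p k N) (X (i, j)))


namespace Derivation

open scoped KaehlerDifferential

variable {R A : Type*} [CommRing R] [CommRing A] [Algebra R A]

/-- The general Leibniz rule for iterates of a derivation. -/
theorem iterate_leibniz (D : Derivation R A A) (n : ℕ) (x y : A) :
    D^[n] (x * y) =
      ∑ i ∈ Finset.range (n + 1), (n.choose i : A) * (D^[i] x * D^[n - i] y) := by
  have key : ∀ n, D^[n] (x * y) =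
      ∑ m ∈ Finset.HasAntidiagonal.antidiagonal n, (n.choose m.1) • (D^[m.1] x * D^[m.2] y) := by
    intro n
    induction n with
    | zero => simp
    | succ n ih =>
      rw [Finset.sum_antidiagonal_choose_succ_nsmul (fun i j => D^[i] x * D^[j] y) n,
        Function.iterate_succ_apply', ih, map_sum, ← Finset.sum_add_distrib]
      refine Finset.sum_congr rfl fun m hm => ?_
      rw [Nat.choose_symm_of_eq_add (Finset.HasAntidiagonal.mem_antidiagonal.1 hm).symm, map_nsmul, D.leibniz, smul_eq_mul, smul_eq_mul, ← Function.iterate_succ_apply' D,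
        ← Function.iterate_succ_apply' D, smul_add, mul_comm (D^[m.2] y)]
  rw [key, Finset.Nat.sum_antidiagonal_eq_sum_range_succ
    (fun i j => (n.choose i) • (D^[i] x * D^[j] y))]
  simp [nsmul_eq_mul]

/-- If `c` is killed by the prime `p`, then `c • D ^ p` is again a derivation. -/
theorem mul_iterate_prime_leibniz (D : Derivation R A A) {p : ℕ} (hp : p.Prime) {c : A}
    (hc : c * p = 0) (x y : A) :
    c * D^[p] (x * y) = x * (c * D^[p] y) + y * (c * D^[p] x) := by
  obtain ⟨q, rfl⟩ := Nat.exists_eq_succ_of_ne_zero hp.ne_zero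
  rw [iterate_leibniz, Finset.sum_range_succ, Finset.sum_range_succ', mul_add, mul_add, Finset.mul_sum, Finset.sum_eq_zero]
  · simp
    ring
  · intro i hi
    obtain ⟨m, hm⟩ := hp.dvd_choose_self (Nat.succ_ne_zero i)
      (Nat.succ_lt_succ (Finset.mem_range.1 hi))
    rw [hm, Nat.succ_eq_add_one]
    generalize D^[q.succ - (i + 1)] y = w
    push_cast at hc ⊢
    linear_combination (m * (D^[i + 1] x * w)) * hc

/-- The `p`-th iterate of a derivation, multiplied by an element killed by `p`. -/
def mulIteratePrime (D : Derivation R A A) {p : ℕ} (hp : p.Prime) {c : A}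
    (hc : c * p = 0) : Derivation R A A :=
  Derivation.mk' (c • (D : A →ₗ[R] A) ^ p) fun x y => by
    simpa [Module.End.pow_apply] using D.mul_iterate_prime_leibniz hp hc x y

theorem mulIteratePrime_apply (D : Derivation R A A) {p : ℕ} (hp : p.Prime) {c : A}
    (hc : c * p = 0) (x : A) : D.mulIteratePrime hp hc x = c * D^[p] x := by
  simp [mulIteratePrime, Module.End.pow_apply]

/-- If `D y = z` and `D z = 0`, then `Dⁿ (yⁿ z) = n! zⁿ⁺¹`. -/
theorem iterate_pow_mul (D : Derivation R A A) {y z : A} (hy : D y = z) (hz : D z = 0) (n : ℕ) :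
    ∀ w, D w = 0 → D^[n] (y ^ n * w) = (n.factorial : A) * z ^ n * w := by
  induction n with
  | zero => simp
  | succ n ih =>
    intro w hw
    have : D (y ^ (n + 1) * w) = y ^ n * ((n + 1 : ℕ) * z * w) := by
      rw [D.leibniz, hw, D.leibniz_pow, hy]
      simp
      ring
    rw [Function.iterate_succ_apply, this, ih _ (by simp [hz, hw])]
    push_cast [Nat.factorial_succ]
    ring

theorem mul_apply_pow_prime_mul_algebraMap (D : Derivation R A A) {p : ℕ}
    (hp2 : (p : A) * p = 0) (x : A) (r : R) : p * D (x ^ p * algebraMap R A r) = 0 := by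
  rw [D.leibniz, D.map_algebraMap, D.leibniz_pow]
  simp only [nsmul_eq_mul, smul_eq_mul]
  linear_combination (algebraMap R A r * (x ^ (p - 1) * D x)) * hp2

/-- A derivation which vanishes before localization is zero. -/
theorem eq_zero_of_isLocalization {B M : Type*} [CommRing B] [Algebra R B] [Algebra B A]
    [IsScalarTower R B A] [AddCommGroup M] [Module A M] [Module B M] [Module R M]
    [IsScalarTower B A M] (S : Submonoid B) [IsLocalization S A] (D : Derivation R A M)
    (h : ∀ b, D (algebraMap B A b) = 0) : D = 0 := by
  ext a
  obtain ⟨⟨b, s⟩, hs⟩ := IsLocalization.surj S a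
  have h1 := congrArg D hs
  rw [h, D.leibniz, h, smul_zero, zero_add] at h1
  exact (IsLocalization.map_units A s).smul_eq_zero.1 h1

/-- Derivations extend along formally étale algebras. -/
theorem exists_extension_of_formallyEtale {P : Type*} [CommRing P] [Algebra R P] [Algebra P A]
    [IsScalarTower R P A] [Algebra.FormallyEtale P A] (D : Derivation R P A) :
    ∃ D' : Derivation R A A, ∀ x, D' (algebraMap P A x) = D x := by
  let L : Ω[A⁄R] →ₗ[A] A :=
    D.liftKaehlerDifferential.liftBaseChange A ∘ₗ
      (KaehlerDifferential.tensorKaehlerEquivOfFormallyEtale R P A).symm.toLinearMap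
  refine ⟨L.compDer (KaehlerDifferential.D R A), fun x => ?_⟩
  simp [L, KaehlerDifferential.tensorKaehlerEquivOfFormallyEtale_symm_D_algebraMap]

end Derivation

section LieInvariant

variable {R A n : Type*} [CommRing R] [CommRing A] [Algebra R A] [Fintype n] [DecidableEq n]

/-- Contraction of the Lie invariance condition with a left invariant vector field. -/
theorem lieInvariant_contract {p : ℕ} (hp2 : (p : A) * p = 0)
    (X Xinv Finv : Matrix n n A) (hX : Xinv * X = 1) (φ : A →+* A)
    (hF : X.map φ * Finv = 1)
    (hφ : ∀ a, φ a - a ^ p ∈ Ideal.span {(p : A)})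
    (lam : n × n → n × n → R)
    (hLie : ∀ i j : n, ∑ s : n, Finv i s • KaehlerDifferential.D R A (φ (X s j)) =
      ∑ s : n, ∑ l : n, algebraMap R A ((p : R) * lam (i, j) (s, l)) •
        (∑ m : n, Xinv s m • KaehlerDifferential.D R A (X m l)))
    (u : Matrix n n R) (D : Derivation R A A)
    (hD : ∀ i j, D (X i j) = (X * u.map (algebraMap R A)) i j) (i j : n) :
    ∃ c : n → R, D (φ (X i j)) = p * ∑ r, X i r ^ p * algebraMap R A (c r) := by
  have hωD (s l : n) : ∑ m, Xinv s m * D (X m l) = algebraMap R A (u s l) := by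
    have : (Xinv * (X * u.map (algebraMap R A))) s l = algebraMap R A (u s l) := by
      rw [← mul_assoc, hX, one_mul, Matrix.map_apply]
    simpa only [Matrix.mul_apply (M := Xinv), ← hD] using this
  let c : n → R := fun r => ∑ s, ∑ l, lam (r, j) (s, l) * u s l
  have hc (r : n) : ∑ s, Finv r s * D (φ (X s j)) = p * algebraMap R A (c r) := by
    have := congrArg D.liftKaehlerDifferential (hLie r j)
    simp only [map_sum, map_smul, Derivation.liftKaehlerDifferential_comp_D, smul_eq_mul,
      hωD] at this
    rw [this]
    simp [c, map_sum, Finset.mul_sum, mul_assoc]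
  have hmul : X.map φ * (Finv * Matrix.of fun s t => D (φ (X s t))) =
      Matrix.of fun s t => D (φ (X s t)) := by rw [← mul_assoc, hF, one_mul]
  refine ⟨c, ?_⟩
  have h1 := congrFun (congrFun hmul i) j
  rw [Matrix.mul_apply, Matrix.of_apply] at h1
  rw [← h1, Finset.mul_sum]
  refine Finset.sum_congr rfl fun r _ => ?_
  obtain ⟨g, hg⟩ := Ideal.mem_span_singleton.1 (hφ (X i r))
  rw [Matrix.mul_apply]
  simp only [Matrix.of_apply, Matrix.map_apply, hc]
  linear_combination (p * algebraMap R A (c r)) * hg + (g * algebraMap R A (c r)) * hp2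

theorem lieInvariant_mul_pow_eq_zero {p : ℕ} (hp : p.Prime) (hp2 : (p : A) * p = 0)
    (X Xinv Finv : Matrix n n A) (hX : Xinv * X = 1) (φ : A →+* A)
    (hF : X.map φ * Finv = 1)
    (hφ : ∀ a, φ a - a ^ p ∈ Ideal.span {(p : A)})
    (lam : n × n → n × n → R)
    (hLie : ∀ i j : n, ∑ s : n, Finv i s • KaehlerDifferential.D R A (φ (X s j)) =
      ∑ s : n, ∑ l : n, algebraMap R A ((p : R) * lam (i, j) (s, l)) •
        (∑ m : n, Xinv s m • KaehlerDifferential.D R A (X m l)))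
    (hext : ∀ D : Derivation R A A, (∀ i j, D (X i j) = 0) → D = 0)
    (hex : ∀ Y : Matrix n n A, ∃ D : Derivation R A A, ∀ i j, D (X i j) = Y i j)
    {a b : n} (hab : a ≠ b) : (p : A) * X a a ^ p = 0 := by
  obtain ⟨D₁, hD₁⟩ := hex (X * (Matrix.single a a (1 : R)).map (algebraMap R A))
  obtain ⟨D₂, hD₂⟩ := hex (X * (Matrix.single a b (1 : R)).map (algebraMap R A))
  obtain ⟨c₁, hc₁⟩ := lieInvariant_contract hp2 X Xinv Finv hX φ hF hφ lam hLie _ D₁ hD₁ a b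
  obtain ⟨c₂, hc₂⟩ := lieInvariant_contract hp2 X Xinv Finv hX φ hF hφ lam hLie _ D₂ hD₂ a b
  replace hD₁ (i j : n) : D₁ (X i j) = if j = a then X i a else 0 := by
    rw [hD₁, Matrix.map_single _ _ _ _, map_one]
    split_ifs with h
    · subst h; simp
    · simp [Matrix.mul_single_apply_of_ne _ _ _ _ _ h]
  replace hD₂ (i j : n) : D₂ (X i j) = if j = b then X i a else 0 := by
    rw [hD₂, Matrix.map_single _ _ _ _, map_one]
    split_ifs with h
    · subst h; simp
    · simp [Matrix.mul_single_apply_of_ne _ _ _ _ _ h]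
  have hconst (D : Derivation R A A) (c : n → R) :
      p * D (∑ r, X a r ^ p * algebraMap R A (c r)) = 0 := by
    rw [map_sum, Finset.mul_sum]
    exact Finset.sum_eq_zero fun r _ => D.mul_apply_pow_prime_mul_algebraMap hp2 _ _
  have hnat (D : Derivation R A A) (x : A) : D (p * x) = p * D x := by
    simp
  obtain ⟨g, hg⟩ := Ideal.mem_span_singleton.1 (hφ (X a b))
  replace hg : φ (X a b) = X a b ^ p + p * g := by rw [← hg]; ring
  have hbracket : ⁅D₁, D₂⁆ = D₂ := by
    refine sub_eq_zero.1 (hext _ fun i j => ?_)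
    by_cases hjb : j = b
    · simp [Derivation.commutator_apply, hD₁, hD₂, hjb, hab.symm]
    · by_cases hja : j = a <;> simp [Derivation.commutator_apply, hD₁, hD₂, hjb, hja, hab]
  have hpow : D₂.mulIteratePrime hp hp2 = 0 := by
    refine hext _ fun i j => ?_
    obtain ⟨q, rfl⟩ := Nat.exists_eq_add_of_le hp.two_le
    have h0 : ∀ m, D₂^[m] 0 = 0 := fun m => Function.iterate_fixed (map_zero _) m
    rw [Derivation.mulIteratePrime_apply, add_comm 2 q, Function.iterate_add_apply]
    by_cases hjb : j = b <;> simp [hD₂, hjb, hab, h0]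
  rw [hg, map_add, hnat, Derivation.leibniz_pow] at hc₁ hc₂
  have e₁ := congrArg D₂ hc₁
  have e₂ := congrArg D₁ hc₂
  rw [hnat, hconst] at e₁ e₂
  simp only [hD₁, hD₂, if_neg hab.symm, mul_zero, zero_add, if_true, hnat, nsmul_eq_mul,
    smul_eq_mul, map_add] at e₁ e₂
  have hD₁z : D₁ (X a b ^ (p - 1) * X a a) = X a b ^ (p - 1) * X a a := by
    rw [D₁.leibniz, D₁.leibniz_pow]
    simp [hD₁, hab.symm]
  rw [hD₁z] at e₂
  have hD₂g : p * D₂ g = - (p * (X a b ^ (p - 1) * X a a)) := by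
    have := D₁.commutator_apply (D2 := D₂) g
    rw [hbracket] at this
    rw [this]
    linear_combination e₂ - e₁
  have hD₂it (m : ℕ) (x : A) : D₂^[m] (p * x) = p * D₂^[m] x := by
    induction m generalizing x with
    | zero => rfl
    | succ m ih => rw [Function.iterate_succ_apply, hnat, ih, Function.iterate_succ_apply]
  have hfac : (p : A) * (((p - 1).factorial : A) * X a a ^ p) = 0 := by
    have h1 : (p : A) * D₂^[p] g = 0 := by
      rw [← D₂.mulIteratePrime_apply hp hp2, hpow, Derivation.coe_zero, Pi.zero_apply]
    obtain ⟨q, hq⟩ := Nat.exists_eq_add_of_le' hp.one_le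
    rw [hq, Nat.add_sub_cancel, ← hq]
    rw [hq, Nat.add_sub_cancel, ← hq] at hD₂g
    have h2 : (p : A) * D₂^[q] (X a b ^ q * X a a) = 0 := by
      rw [← hD₂it, ← neg_eq_zero]
      have h3 : D₂^[q] (-(p * (X a b ^ q * X a a))) = p * D₂^[p] g := by
        rw [← hD₂g, hD₂it]
        congr 1
        rw [hq, Function.iterate_succ_apply]
      rw [← h1, ← h3]
      have hneg : Function.Semiconj (fun x : A => -x) D₂ D₂ := fun x => (map_neg D₂ x).symm
      exact hneg.iterate_right q _
    rw [D₂.iterate_pow_mul (z := X a a) (by simp [hD₂]) (by simp [hD₂, hab]) q _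
      (by simp [hD₂, hab])] at h2
    rw [← h2]
    nth_rw 2 [hq]
    ring
  have hcop : IsCoprime (p : ℤ) ((p - 1).factorial : ℤ) :=
    Nat.isCoprime_iff_coprime.2 ((hp.coprime_iff_not_dvd).2 fun h =>
      absurd ((hp.dvd_factorial).1 h) (by have := hp.pos; omega))
  obtain ⟨x, y, hxy⟩ := hcop
  have hxy' : (x : A) * p + y * ((p - 1).factorial : A) = 1 := by
    exact_mod_cast congrArg (Int.cast (R := A)) hxy
  linear_combination (-(p * X a a ^ p)) * hxy' + (x * X a a ^ p) * hp2 + y * hfac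

end LieInvariant

section Residue

variable (p : ℕ) [Fact p.Prime] (k : Type) [Field k]

/-- The residue map `R₂ → k`. -/
noncomputable def residueTwo [CharP k p] : Rtwo p k →+* k :=
  Ideal.Quotient.lift _ WittVector.constantCoeff fun x hx => by
    obtain ⟨y, rfl⟩ := Ideal.mem_span_singleton.1 hx
    have : WittVector.constantCoeff (p : WittVector p k) = 0 := by simp
    rw [map_mul, map_pow, this]
    simp

variable {p k}

theorem p_mul_p_eq_zero_Rtwo : (p : Rtwo p k) * p = 0 := by
  have : Ideal.Quotient.mk (Ideal.span {(p : WittVector p k) ^ 2}) ((p : WittVector p k) ^ 2) =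
      0 :=
    Ideal.Quotient.eq_zero_iff_mem.2 (Ideal.mem_span_singleton_self _)
  rw [map_pow, map_natCast] at this
  rwa [← sq]

variable [CharP k p]

theorem residueTwo_eq_zero_iff [PerfectRing k p] (r : Rtwo p k) : residueTwo p k r = 0 ↔ (p : Rtwo p k) ∣ r := by
  obtain ⟨w, rfl⟩ := Ideal.Quotient.mk_surjective r
  constructor
  · intro h
    have hw : w ∈ Ideal.span {(p : WittVector p k)} :=
      (WittVector.mem_span_p_iff_coeff_zero_eq_zero w).2 h
    obtain ⟨v, rfl⟩ := Ideal.mem_span_singleton.1 hw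
    exact ⟨Ideal.Quotient.mk _ v, by simp⟩
  · rintro ⟨s, hs⟩
    rw [hs, map_mul, map_natCast, CharP.cast_eq_zero, zero_mul]

theorem residueTwo_eq_zero_of_p_mul {r : Rtwo p k} (h : (p : Rtwo p k) * r = 0) :
    residueTwo p k r = 0 := by
  obtain ⟨w, rfl⟩ := Ideal.Quotient.mk_surjective r
  have h1 : (p : WittVector p k) * w ∈ Ideal.span {((p : WittVector p k)) ^ 2} := by
    rw [← Ideal.Quotient.eq_zero_iff_mem, map_mul, map_natCast]
    exact h
  obtain ⟨v, hv⟩ := Ideal.mem_span_singleton.1 h1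
  rw [sq, mul_assoc] at hv
  rw [mul_left_cancel₀ (WittVector.p_nonzero p k) hv]
  change WittVector.constantCoeff ((p : WittVector p k) * v) = 0
  rw [map_mul, map_natCast, CharP.cast_eq_zero, zero_mul]

variable {τ : Type*}

theorem map_residueTwo_eq_zero_iff [PerfectRing k p] (f : MvPolynomial τ (Rtwo p k)) :
    map (residueTwo p k) f = 0 ↔ (p : MvPolynomial τ (Rtwo p k)) ∣ f := by
  rw [← map_natCast (C (σ := τ) (R := Rtwo p k)) p, 
    C_dvd_iff_map_hom_eq_zero _ _ residueTwo_eq_zero_iff]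

theorem map_residueTwo_eq_zero_of_p_mul {f : MvPolynomial τ (Rtwo p k)}
    (h : (p : MvPolynomial τ (Rtwo p k)) * f = 0) : map (residueTwo p k) f = 0 := by
  ext m
  rw [coeff_map, coeff_zero]
  refine residueTwo_eq_zero_of_p_mul ?_
  rw [← coeff_C_mul, map_natCast, h, coeff_zero]

theorem map_det_residueTwo_ne_zero (N : ℕ) : map (residueTwo p k)
    ((Matrix.of fun i j : Fin N =>
        (X (i, j) : MvPolynomial (Fin N × Fin N) (Rtwo p k))).det) ≠ 0 := by
  rw [RingHom.map_det]
  convert Matrix.det_mvPolynomialX_ne_zero (Fin N) k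
  ext
  simp

end Residue

section Coordinates

variable {p : ℕ} [Fact p.Prime] {k : Type} [Field k] {N : ℕ} (h : glCoordRing p k N)

theorem p_mul_pow_glCoordMatrix_ne_zero [CharP k p] [PerfectRing k p]
    (hh : h ∉ Ideal.span {(p : glCoordRing p k N)}) (i j : Fin N) (n : ℕ) :
    (p : Localization.Away h) * glCoordMatrix p k N h i j ^ n ≠ 0 := by
  intro h0
  let P := MvPolynomial (Fin N × Fin N) (Rtwo p k)
  let x : P := X (i, j)
  let δ : P := (Matrix.of fun i j : Fin N => (X (i, j) : P)).det
  have e1 : algebraMap (glCoordRing p k N) (Localization.Away h)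
      (algebraMap P (glCoordRing p k N) ((p : P) * x ^ n)) = 0 := by
    rw [← h0, map_mul, map_mul, map_pow, map_pow, map_natCast, map_natCast]
    rfl
  obtain ⟨⟨_, m, rfl⟩, e2⟩ := (IsLocalization.map_eq_zero_iff (Submonoid.powers h) _ _).1 e1
  obtain ⟨⟨a, ⟨_, q, rfl⟩⟩, ha⟩ := IsLocalization.surj (Submonoid.powers δ) h
  dsimp only at e2 ha
  have e3 : algebraMap P (glCoordRing p k N) (a ^ m * ((p : P) * x ^ n)) = 0 := by
    rw [map_mul, map_pow, ← ha, mul_pow, mul_right_comm, e2, zero_mul]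
  obtain ⟨⟨_, t, rfl⟩, e4⟩ := (IsLocalization.map_eq_zero_iff (Submonoid.powers δ) _ _).1 e3
  have e5 : (p : P) * (δ ^ t * a ^ m * x ^ n) = 0 := by
    rw [← e4]
    ring
  have hδ : map (residueTwo p k) δ ≠ 0 := map_det_residueTwo_ne_zero N
  have e6 := map_residueTwo_eq_zero_of_p_mul e5
  rw [map_mul, map_mul, map_pow, map_pow, map_pow, map_X] at e6
  have e7 : map (residueTwo p k) a = 0 := by
    by_contra hne
    exact mul_ne_zero (mul_ne_zero (pow_ne_zero _ hδ) (pow_ne_zero _ hne))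
      (pow_ne_zero _ (X_ne_zero _)) e6
  obtain ⟨c, rfl⟩ := (map_residueTwo_eq_zero_iff a).1 e7
  have hu : IsUnit (algebraMap P (glCoordRing p k N) (δ ^ q)) :=
    IsLocalization.map_units _ (⟨δ ^ q, q, rfl⟩ : Submonoid.powers δ)
  refine hh (Ideal.mem_span_singleton.2 (hu.dvd_mul_right.1 ?_))
  rw [ha, map_mul, map_natCast]
  exact dvd_mul_right _ _

theorem derivation_eq_zero_of_glCoordMatrix
    (D : Derivation (Rtwo p k) (Localization.Away h) (Localization.Away h))
    (hD : ∀ i j, D (glCoordMatrix p k N h i j) = 0) : D = 0 := by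
  have hB : D.compAlgebraMap (glCoordRing p k N) = 0 := by
    refine Derivation.eq_zero_of_isLocalization
      (B := MvPolynomial (Fin N × Fin N) (Rtwo p k)) (Submonoid.powers
        (Matrix.of fun i j : Fin N => X (i, j)).det) _ fun f => ?_
    exact DFunLike.congr_fun (derivation_ext
      (D₁ := (D.compAlgebraMap (glCoordRing p k N)).compAlgebraMap
        (MvPolynomial (Fin N × Fin N) (Rtwo p k))) (D₂ := 0) fun i => hD i.1 i.2) f
  exact Derivation.eq_zero_of_isLocalization (Submonoid.powers h) D (DFunLike.congr_fun hB)

theorem exists_derivation_glCoordMatrix (Y : Matrix (Fin N) (Fin N) (Localization.Away h)) :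
    ∃ D : Derivation (Rtwo p k) (Localization.Away h) (Localization.Away h),
      ∀ i j, D (glCoordMatrix p k N h i j) = Y i j := by
  let P := MvPolynomial (Fin N × Fin N) (Rtwo p k)
  have h1 : Algebra.FormallyEtale P (glCoordRing p k N) :=
    .of_isLocalization (Submonoid.powers
      ((Matrix.of fun i j : Fin N => (X (i, j) : P)).det))
  have h2 : Algebra.FormallyEtale (glCoordRing p k N) (Localization.Away h) :=
    .of_isLocalization (Submonoid.powers h)
  have h3 : Algebra.FormallyEtale P (Localization.Away h) := .comp P (glCoordRing p k N) _
  obtain ⟨D, hD⟩ := Derivation.exists_extension_of_formallyEtale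
    (mkDerivation (Rtwo p k) fun ij : Fin N × Fin N => Y ij.1 ij.2)
  refine ⟨D, fun i j => ?_⟩
  rw [← mkDerivation_X (Rtwo p k) (fun ij : Fin N × Fin N => Y ij.1 ij.2) (i, j), ← hD]
  rfl

end Coordinates

/-- There is no Frobenius lift on any basic open of `GL_N` over `R₂` that is Lie invariant
mod `p` (i.e. whose action on the invariant forms, divided by `p`, is given by a matrix `λ`
over `R₂` multiplied by `p`, in the mod-`p²` formulation). -/
theorem no_lie_invariant_frobenius_lift_GL (p : ℕ) [Fact p.Prime]
    (k : Type) [Field k] [IsAlgClosed k] [CharP k p]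
    (N : ℕ) (hN : 2 ≤ N)
    (h : glCoordRing p k N) (hh : h ∉ Ideal.span {(p : glCoordRing p k N)}) :
    ¬ ∃ (φ : Localization.Away h →+* Localization.Away h)
        (lam : (Fin N × Fin N) → (Fin N × Fin N) → Rtwo p k)
        (Xinv Finv : Matrix (Fin N) (Fin N) (Localization.Away h)),
      -- `Xinv` is the inverse of the coordinate matrix `X`
      glCoordMatrix p k N h * Xinv = 1 ∧ Xinv * glCoordMatrix p k N h = 1 ∧
      -- `Finv` is the inverse of the matrix `φ(X)`
      (glCoordMatrix p k N h).map φ * Finv = 1 ∧ Finv * (glCoordMatrix p k N h).map φ = 1 ∧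
      -- (a) `φ` lifts `σ` on `R₂`
      (∀ r : Rtwo p k,
        φ (algebraMap (Rtwo p k) (Localization.Away h) r) =
          algebraMap (Rtwo p k) (Localization.Away h) (sigmaTwo p k r)) ∧
      -- (b) `φ` is a Frobenius lift
      (∀ a : Localization.Away h, φ a - a ^ p ∈ Ideal.span {(p : Localization.Away h)}) ∧
      -- (c) Lie invariance mod `p` (formulated mod `p²`)
      (∀ i j : Fin N,
        ∑ s : Fin N, Finv i s •
            KaehlerDifferential.D (Rtwo p k) (Localization.Away h)
              (φ (glCoordMatrix p k N h s j)) =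
          ∑ s : Fin N, ∑ l : Fin N,
            algebraMap (Rtwo p k) (Localization.Away h) ((p : Rtwo p k) * lam (i, j) (s, l)) •
              (∑ m : Fin N, Xinv s m •
                KaehlerDifferential.D (Rtwo p k) (Localization.Away h)
                  (glCoordMatrix p k N h m l))) := by
  rintro ⟨φ, lam, Xinv, Finv, -, hX, hF, -, -, hφ, hLie⟩
  have hp2 : (p : Localization.Away h) * p = 0 := by
    simpa using congrArg (algebraMap (Rtwo p k) (Localization.Away h)) p_mul_p_eq_zero_Rtwo
  exact p_mul_pow_glCoordMatrix_ne_zero h hh ⟨0, by omega⟩ ⟨0, by omega⟩ p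
    (lieInvariant_mul_pow_eq_zero Fact.out hp2 _ Xinv Finv hX φ hF hφ lam hLie
      (derivation_eq_zero_of_glCoordMatrix h) (exists_derivation_glCoordMatrix h)
      (b := ⟨1, by omega⟩) (by simp))
end

section
/- Let p be a prime and N ≥ 2. Let u be an N×N matrix over R with u ≠ 1 and (u−1)^p = 0. Then there exist an integer e ≥ 0, an invertible N×N matrix v over R, and an N×N matrix E(t) with entries in the polynomial ring R[t], such that: (i) evaluating E at t = 0 gives the identity matrix; (ii) the one-parameter group identity holds: in matrices over the two-variable polynomial ring R[s,t], the matrix obtained from E by substituting s+t for t equals the product of the matrices obtained by substituting s and t respectively; (iii) evaluating E at t = p^e gives v·u·v⁻¹; and (iv) modulo p one has the block form E ≡ [[1₂ + t·ν₂, *],[0, *]]: the polynomials E_{11} − 1, E_{22} − 1, E_{21}, E_{12} − t all lie in p·R[t], and for every index i ≥ 3 the polynomials E_{i1} and E_{i2} lie in p·R[t]. -/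
open MvPolynomial
open scoped Matrix

/-- The polynomial `∑_{i < d} tⁱ / i!`, with `Ring.inverse` playing the role of division. -/
noncomputable def truncatedExp (R : Type*) [CommRing R] (d : ℕ) : Polynomial R :=
  ∑ i ∈ Finset.range d, Polynomial.monomial i (Ring.inverse (i.factorial : R))

section TruncatedExp

variable {R : Type*} [CommRing R]

theorem coeff_truncatedExp (d m : ℕ) :
    (truncatedExp R d).coeff m = if m < d then Ring.inverse (m.factorial : R) else 0 := by
  simp [truncatedExp, Polynomial.finsetSum_coeff, Polynomial.coeff_monomial]

theorem aeval_truncatedExp {A : Type*} [Ring A] [Algebra R A] (d : ℕ) (x : A) :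
    Polynomial.aeval x (truncatedExp R d) =
      ∑ i ∈ Finset.range d, Ring.inverse (i.factorial : R) • x ^ i := by
  simp [truncatedExp, Polynomial.aeval_monomial, Algebra.smul_def]

theorem inverse_factorial_mul_choose {d i j : ℕ} (h : ∀ m < d, IsUnit (m.factorial : R))
    (hij : i + j < d) :
    Ring.inverse ((i + j).factorial : R) * ((i + j).choose i : R) =
      Ring.inverse (i.factorial : R) * Ring.inverse (j.factorial : R) := by
  have e : ((i + j).choose i : R) * (i.factorial * j.factorial) = (i + j).factorial := by
    rw [← Nat.add_choose_mul_factorial_mul_factorial i j, Nat.choose_symm_add]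
    push_cast
    rw [mul_assoc]
  have hi := Ring.inverse_mul_cancel _ (h i (by omega))
  have hj := Ring.inverse_mul_cancel _ (h j (by omega))
  have hs := Ring.inverse_mul_cancel _ (h (i + j) hij)
  rw [← e] at hs
  rw [← e]
  linear_combination (Ring.inverse (i.factorial : R) * Ring.inverse (j.factorial : R)) * hs -
    Ring.inverse (((i + j).choose i : R) * (i.factorial * j.factorial)) * ((i + j).choose i : R) *
      (j.factorial * Ring.inverse (j.factorial : R) * hi + hj)

theorem aeval_truncatedExp_add {A : Type*} [Ring A] [Algebra R A] {d : ℕ}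
    (h : ∀ m < d, IsUnit (m.factorial : R)) {x y : A} (hxy : Commute x y)
    (hd : ∀ i j, d ≤ i + j → x ^ i * y ^ j = 0) :
    Polynomial.aeval (x + y) (truncatedExp R d) =
      Polynomial.aeval x (truncatedExp R d) * Polynomial.aeval y (truncatedExp R d) := by
  simp only [aeval_truncatedExp]
  let f : ℕ → ℕ → A := fun i j ↦
    (Ring.inverse (i.factorial : R) * Ring.inverse (j.factorial : R)) • (x ^ i * y ^ j)
  calc
    _ = ∑ m ∈ Finset.range d, ∑ i ∈ Finset.range (m + 1), f i (m - i) := by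
      refine Finset.sum_congr rfl fun m hm ↦ ?_
      rw [hxy.add_pow, Finset.smul_sum]
      refine Finset.sum_congr rfl fun i hi ↦ ?_
      obtain ⟨j, rfl⟩ := Nat.exists_eq_add_of_le (Finset.mem_range_succ_iff.mp hi)
      simp only [f, Nat.add_sub_cancel_left]
      rw [← inverse_factorial_mul_choose h (Finset.mem_range.mp hm), mul_smul,
        Nat.cast_smul_eq_nsmul, nsmul_eq_mul, (Nat.cast_commute _ _).eq]
    _ = ∑ i ∈ Finset.range d, ∑ j ∈ Finset.range (d - i), f i j := Finset.sum_range_diag_flip d f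
    _ = ∑ i ∈ Finset.range d, ∑ j ∈ Finset.range d, f i j := by
      refine Finset.sum_congr rfl fun i _ ↦ Finset.sum_subset (by simp) fun j _ hj ↦ ?_
      simp only [f]
      rw [hd i j (by simp at hj; omega), smul_zero]
    _ = _ := by
      simp only [Finset.sum_mul_sum, f, smul_mul_smul_comm]

/-- The truncated exponential is surjective onto `1 + (X)` modulo `X ^ m`. -/
theorem exists_truncatedExp_comp_sub_dvd {d : ℕ} (hd : 2 ≤ d) (m : ℕ) :
    ∃ f : Polynomial R, Polynomial.X ∣ f ∧
      Polynomial.X ^ (m + 1) ∣ Polynomial.aeval f (truncatedExp R d) - (1 + Polynomial.X) := by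
  induction m with
  | zero =>
    refine ⟨0, dvd_zero _, ?_⟩
    simp [← Polynomial.coeff_zero_eq_aeval_zero', coeff_truncatedExp, show 0 < d by omega]
  | succ m ih =>
    obtain ⟨f, hf, g, hg⟩ := ih
    let y : Polynomial R := -(Polynomial.C (g.coeff 0) * Polynomial.X ^ (m + 1))
    have hy : Polynomial.X ^ (m + 1) ∣ y := (dvd_mul_left _ _).neg_right
    have hXy : Polynomial.X ∣ y := (dvd_pow_self _ m.succ_ne_zero).trans hy
    have hpow (i : ℕ) : Polynomial.X ^ (m + 2) ∣ (f + y) ^ (i + 2) - f ^ (i + 2) := by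
      have e : (f + y) ^ (i + 2) - f ^ (i + 2) =
          ((f + y) ^ (i + 1) - f ^ (i + 1)) * (f + y) + y * f ^ (i + 1) := by ring
      rw [e, pow_succ]
      refine dvd_add (mul_dvd_mul (dvd_trans ?_ (sub_dvd_pow_sub_pow _ _ _)) (dvd_add hf hXy))
        (mul_dvd_mul hy (hf.trans (dvd_pow_self _ i.succ_ne_zero)))
      simpa using hy
    refine ⟨f + y, dvd_add hf hXy, ?_⟩
    obtain ⟨d, rfl⟩ := Nat.exists_eq_add_of_le' hd
    have e : Polynomial.aeval (f + y) (truncatedExp R (d + 2)) - (1 + Polynomial.X) =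
        (∑ i ∈ Finset.range d, Ring.inverse ((i + 2).factorial : R) •
          ((f + y) ^ (i + 2) - f ^ (i + 2))) +
        Polynomial.X ^ (m + 1) * (g - Polynomial.C (g.coeff 0)) := by
      rw [mul_sub, ← hg]
      simp only [aeval_truncatedExp, Finset.sum_range_succ' _ (d + 1), Finset.sum_range_succ' _ d,
        smul_sub, Finset.sum_sub_distrib, y]
      simp
      ring
    rw [e]
    refine dvd_add (Finset.dvd_sum fun i _ ↦ dvd_smul_of_dvd _ (hpow i)) ?_
    rw [pow_succ _ (m + 1)]
    refine mul_dvd_mul_left _ ?_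
    rw [Polynomial.X_dvd_iff]
    simp

theorem exists_aeval_truncatedExp_eq {A : Type*} [Ring A] [Algebra R A] {d : ℕ} (hd : 2 ≤ d)
    {n : A} (hn : n ^ d = 0) :
    ∃ x : A, x ^ d = 0 ∧ Polynomial.aeval x (truncatedExp R d) = 1 + n := by
  obtain ⟨d, rfl⟩ := Nat.exists_eq_add_of_le' (show 1 ≤ d by omega)
  obtain ⟨f, hf, g, hg⟩ := exists_truncatedExp_comp_sub_dvd (R := R) hd d
  refine ⟨Polynomial.aeval n f, ?_, ?_⟩
  · obtain ⟨q, hq⟩ := pow_dvd_pow_of_dvd hf (d + 1)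
    rw [← map_pow, hq]
    simp [hn]
  · have := congr(Polynomial.aeval n $hg)
    rw [map_mul, map_pow, Polynomial.aeval_X, hn, zero_mul, map_sub, sub_eq_zero,
      ← Polynomial.aeval_algHom_apply] at this
    simpa using this

theorem aeval_units_conj {A : Type*} [Ring A] [Algebra R A] (v : Aˣ) (x : A) (f : Polynomial R) :
    Polynomial.aeval (v * x * ↑v⁻¹ : A) f = v * Polynomial.aeval x f * ↑v⁻¹ := by
  simp only [Polynomial.aeval_eq_sum_range, Units.conj_pow, Finset.mul_sum, Finset.sum_mul,
    mul_smul_comm, smul_mul_assoc]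

end TruncatedExp

section ExpMatrix

variable {R : Type*} [CommRing R] {ι : Type*} [Fintype ι] [DecidableEq ι]

/-- The matrix `∑_{i < d} sⁱ Yⁱ / i!` over an `R`-algebra containing `s`. -/
noncomputable def expMatrix {S : Type*} [CommRing S] [Algebra R S] (d : ℕ) (Y : Matrix ι ι R)
    (s : S) : Matrix ι ι S :=
  Polynomial.aeval (s • Y.map (algebraMap R S)) (truncatedExp R d)

theorem expMatrix_map {S T : Type*} [CommRing S] [Algebra R S] [CommRing T] [Algebra R T]
    (φ : S →ₐ[R] T) (d : ℕ) (Y : Matrix ι ι R) (s : S) :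
    (expMatrix d Y s).map φ = expMatrix d Y (φ s) := by
  rw [expMatrix, expMatrix, ← AlgHom.mapMatrix_apply, ← Polynomial.aeval_algHom_apply]
  congr 2
  ext i j
  simp

theorem expMatrix_zero {S : Type*} [CommRing S] [Algebra R S] {d : ℕ} (hd : 0 < d)
    (Y : Matrix ι ι R) : expMatrix d Y (0 : S) = 1 := by
  rw [expMatrix, zero_smul, ← Polynomial.coeff_zero_eq_aeval_zero', coeff_truncatedExp, if_pos hd]
  simp

theorem expMatrix_add {S : Type*} [CommRing S] [Algebra R S] {d : ℕ}
    (h : ∀ m < d, IsUnit (m.factorial : R)) {Y : Matrix ι ι R} (hY : Y ^ d = 0) (s t : S) :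
    expMatrix d Y (s + t) = expMatrix d Y s * expMatrix d Y t := by
  have hZ : Y.map (algebraMap R S) ^ d = 0 := by
    rw [← RingHom.mapMatrix_apply, ← map_pow, hY, map_zero]
  rw [expMatrix, add_smul]
  refine aeval_truncatedExp_add h (((Commute.refl _).smul_left s).smul_right t) fun i j hij ↦ ?_
  rw [smul_pow, smul_pow, smul_mul_smul_comm, ← pow_add, pow_eq_zero_of_le hij hZ, smul_zero]

theorem coeff_expMatrix_X (d : ℕ) (Y : Matrix ι ι R) (i j : ι) (m : ℕ) :
    (expMatrix d Y (Polynomial.X : Polynomial R) i j).coeff m =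
      if m < d then Ring.inverse (m.factorial : R) * (Y ^ m) i j else 0 := by
  have e (l : ℕ) : Y.map (algebraMap R (Polynomial R)) ^ l = (Y ^ l).map Polynomial.C := by
    rw [← RingHom.mapMatrix_apply, ← map_pow]
    rfl
  simp only [expMatrix, aeval_truncatedExp, Matrix.sum_apply, smul_pow, Matrix.smul_apply, e,
    Matrix.map_apply, Polynomial.finsetSum_coeff, Polynomial.coeff_smul, smul_eq_mul,
    Polynomial.coeff_X_pow_mul', Polynomial.coeff_C]
  have hi (x : ℕ) (z : R) : (if x ≤ m then if m - x = 0 then z else 0 else 0) =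
      if m = x then z else 0 := by
    split_ifs <;> first | rfl | omega
  simp [hi]

end ExpMatrix

theorem Matrix.exists_mulVec_ne_zero_of_isNilpotent {K ι : Type*} [CommRing K] [Fintype ι]
    [DecidableEq ι] {M : Matrix ι ι K} (h0 : M ≠ 0) (hM : IsNilpotent M) :
    ∃ w, M *ᵥ w ≠ 0 ∧ M *ᵥ (M *ᵥ w) = 0 := by
  obtain ⟨n, hn⟩ := hM
  induction n with
  | zero => exact absurd (by simpa using congr(M * $hn)) h0
  | succ n ih =>
    by_cases hz : M ^ n = 0
    · exact ih hz
    obtain _ | n := n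
    · exact absurd (by simpa using hn) h0
    obtain ⟨x, hx⟩ : ∃ x, M ^ (n + 1) *ᵥ x ≠ 0 := by
      by_contra! hc
      exact hz (Matrix.ext_of_mulVec_single fun j ↦ by simp only [hc, Matrix.zero_mulVec])
    refine ⟨M ^ n *ᵥ x, ?_, ?_⟩
    · rwa [Matrix.mulVec_mulVec, ← pow_succ']
    · rw [Matrix.mulVec_mulVec, Matrix.mulVec_mulVec, mul_assoc, ← pow_succ',
        ← pow_succ', hn, Matrix.zero_mulVec]

theorem LinearIndependent.sumExtend_inl {K V ι : Type*} [DivisionRing K] [AddCommGroup V]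
    [Module K V] {x : ι → V} (hx : LinearIndependent K x) (i : ι) :
    Module.Basis.sumExtend hx (Sum.inl i) = x i := by
  rw [Module.Basis.sumExtend, Module.Basis.reindex_apply, Module.Basis.extend_apply_self]
  rfl

theorem LinearIndependent.exists_isUnit_matrix {K : Type*} [Field K] {m n : ℕ}
    {x : Fin m → Fin n → K} (hx : LinearIndependent K x) (hmn : m ≤ n) :
    ∃ g : Matrix (Fin n) (Fin n) K, IsUnit g ∧
      ∀ i, g *ᵥ Pi.single (Fin.castLE hmn i) 1 = x i := by
  let b : Module.Basis (Fin m ⊕ Module.Basis.sumExtendIndex hx) K (Fin n → K) :=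
    Module.Basis.sumExtend hx
  have : Finite (Module.Basis.sumExtendIndex hx) :=
    have := Module.Finite.finite_basis b
    .of_injective (Sum.inr : _ → Fin m ⊕ _) Sum.inr_injective
  have := Fintype.ofFinite (Module.Basis.sumExtendIndex hx)
  have hc : Fintype.card (Module.Basis.sumExtendIndex hx) = n - m := by
    have := Module.finrank_eq_card_basis b
    simp only [Module.finrank_fin_fun, Fintype.card_sum, Fintype.card_fin] at this
    omega
  let e : Fin m ⊕ Module.Basis.sumExtendIndex hx ≃ Fin n :=
    ((Equiv.refl _).sumCongr (Fintype.equivFinOfCardEq hc)).trans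
      (finSumFinEquiv.trans (finCongr (by omega)))
  refine ⟨(Pi.basisFun K (Fin n)).toMatrix (b.reindex e), ?_, fun i ↦ ?_⟩
  · have := (Pi.basisFun K (Fin n)).invertibleToMatrix (b.reindex e)
    exact isUnit_of_invertible _
  · have he : e (Sum.inl i) = Fin.castLE hmn i := by ext; simp [e]
    ext j
    simp [Module.Basis.toMatrix_apply, ← he, b, hx.sumExtend_inl]

namespace WittVector

variable {p : ℕ} [Fact p.Prime] {k : Type*} [Field k] [CharP k p]

theorem isUnit_factorial {m : ℕ} (hm : m < p) : IsUnit (m.factorial : WittVector p k) := by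
  apply isUnit_of_coeff_zero_ne_zero
  rw [← constantCoeff_apply, map_natCast, Ne, CharP.cast_eq_zero_iff k p,
    (Fact.out : p.Prime).dvd_factorial]
  omega

theorem constantCoeff_eq_zero_iff [PerfectRing k p] (x : WittVector p k) :
    constantCoeff x = 0 ↔ (p : WittVector p k) ∣ x := by
  refine ⟨fun h ↦ ?_, fun ⟨y, hy⟩ ↦ by rw [hy, map_mul, map_natCast, CharP.cast_eq_zero, zero_mul]⟩
  by_cases hx : x = 0
  · simp [hx]
  obtain ⟨m, b, hb, rfl⟩ := exists_eq_pow_p_mul x hx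
  obtain _ | m := m
  · simp_all
  · exact (dvd_pow_self _ m.succ_ne_zero).mul_right _

theorem polynomial_mem_span_p_iff [PerfectRing k p] (f : Polynomial (WittVector p k)) :
    f ∈ Ideal.span {(p : Polynomial (WittVector p k))} ↔ ∀ m, constantCoeff (f.coeff m) = 0 := by
  simp only [constantCoeff_eq_zero_iff, Ideal.mem_span_singleton, ← Polynomial.C_dvd_iff_dvd_coeff,
    map_natCast]

theorem finiteMultiplicity_p_matrix [PerfectRing k p] {ι : Type*} [Fintype ι] [DecidableEq ι]
    {X : Matrix ι ι (WittVector p k)} (hX : X ≠ 0) :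
    FiniteMultiplicity (p : Matrix ι ι (WittVector p k)) X := by
  obtain ⟨i, j, hij⟩ : ∃ i j, X i j ≠ 0 := by
    by_contra! h
    exact hX (Matrix.ext h)
  obtain ⟨n, hn⟩ := FiniteMultiplicity.of_not_isUnit (irreducible p).not_isUnit hij
  refine ⟨n, fun ⟨Y, hY⟩ ↦ hn ⟨Y i j, ?_⟩⟩
  rw [hY, ← Nat.cast_pow, ← nsmul_eq_mul, Matrix.smul_apply, nsmul_eq_mul, Nat.cast_pow]

theorem exists_matrix_eq_pow_smul [PerfectRing k p] {ι : Type*} [Fintype ι] [DecidableEq ι]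
    {X : Matrix ι ι (WittVector p k)} (hX : X ≠ 0) :
    ∃ (e : ℕ) (Y : Matrix ι ι (WittVector p k)),
      X = (p : WittVector p k) ^ e • Y ∧ Y.map constantCoeff ≠ 0 := by
  obtain ⟨Y, hY, hpY⟩ := (finiteMultiplicity_p_matrix hX).exists_eq_pow_mul_and_not_dvd
  refine ⟨multiplicity (p : Matrix ι ι (WittVector p k)) X, Y, ?_, fun h ↦ hpY ?_⟩
  · rw [← Nat.cast_pow, Nat.cast_smul_eq_nsmul, nsmul_eq_mul, Nat.cast_pow]
    exact hY
  · have hd (i j) : (p : WittVector p k) ∣ Y i j :=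
      (constantCoeff_eq_zero_iff _).mp congr($h i j)
    choose Z hZ using hd
    refine ⟨Matrix.of Z, ?_⟩
    ext1 i j
    rw [← nsmul_eq_mul, Matrix.smul_apply, nsmul_eq_mul, hZ, Matrix.of_apply]

theorem exists_isUnit_matrix_map_eq {ι : Type*} [Fintype ι] [DecidableEq ι] {g : Matrix ι ι k}
    (hg : IsUnit g) :
    ∃ v : (Matrix ι ι (WittVector p k))ˣ,
      constantCoeff.mapMatrix (v : Matrix ι ι (WittVector p k)) = g := by
  let G : Matrix ι ι (WittVector p k) := g.map fun x ↦ teichmuller p x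
  have hG : constantCoeff.mapMatrix G = g := by
    ext i j
    simp [G, teichmuller_coeff_zero]
  have hu : IsUnit G := by
    rw [Matrix.isUnit_iff_isUnit_det]
    apply isUnit_of_coeff_zero_ne_zero
    rw [← constantCoeff_apply, RingHom.map_det, hG]
    exact ((Matrix.isUnit_iff_isUnit_det _).mp hg).ne_zero
  exact ⟨hu.unit, hG⟩

end WittVector

theorem Matrix.exists_isUnit_conj_mulVec_single {K : Type*} [Field K] {N : ℕ} (hN : 2 ≤ N)
    {M : Matrix (Fin N) (Fin N) K} (h0 : M ≠ 0) (hM : IsNilpotent M) :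
    ∃ g : Matrix (Fin N) (Fin N) K, IsUnit g ∧
      M *ᵥ (g *ᵥ Pi.single (Fin.castLE hN 0) 1) = 0 ∧
      M *ᵥ (g *ᵥ Pi.single (Fin.castLE hN 1) 1) = g *ᵥ Pi.single (Fin.castLE hN 0) 1 := by
  obtain ⟨w, hw, hw'⟩ := Matrix.exists_mulVec_ne_zero_of_isNilpotent h0 hM
  have hli : LinearIndependent K ![M *ᵥ w, w] := by
    rw [LinearIndependent.pair_iff]
    intro s t hst
    have ht : t = 0 := by
      have := congr(M *ᵥ $hst)
      rw [Matrix.mulVec_add, Matrix.mulVec_smul, Matrix.mulVec_smul, hw', Matrix.mulVec_zero,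
        smul_zero, zero_add] at this
      exact (smul_eq_zero.mp this).resolve_right hw
    subst ht
    rw [zero_smul, add_zero] at hst
    exact ⟨(smul_eq_zero.mp hst).resolve_right hw, rfl⟩
  obtain ⟨g, hg, hgx⟩ := hli.exists_isUnit_matrix hN
  have h₀ : g *ᵥ Pi.single (Fin.castLE hN 0) 1 = M *ᵥ w := hgx 0
  have h₁ : g *ᵥ Pi.single (Fin.castLE hN 1) 1 = w := hgx 1
  exact ⟨g, hg, by rw [h₀, hw'], by rw [h₀, h₁]⟩

/-- Given a nontrivial unipotent matrix `u` over `R = W(k)` with `(u-1)^p = 0`, there is a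
polynomial one-parameter subgroup `E(t)` of `GL_N` over `R` with `E(0) = 1`,
`E(s+t) = E(s)E(t)`, `E(p^e) = v·u·v⁻¹` for some invertible `v`, and
`E ≡ [[1₂ + t·ν₂, *],[0, *]]` mod `p`. -/
theorem unipotent_one_parameter_subgroup (p : ℕ) [Fact p.Prime]
    (k : Type) [Field k] [IsAlgClosed k] [CharP k p] (N : ℕ) (hN : 2 ≤ N)
    (u : Matrix (Fin N) (Fin N) (WittVector p k)) (hu : u ≠ 1)
    (hup : (u - 1) ^ p = 0) :
    ∃ (e : ℕ) (v : (Matrix (Fin N) (Fin N) (WittVector p k))ˣ)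
      (E : Matrix (Fin N) (Fin N) (Polynomial (WittVector p k))),
      -- (i) `E(0) = 1`
      E.map (Polynomial.eval 0) = 1 ∧
      -- (ii) `E(s+t) = E(s)·E(t)` over `R[s,t]`
      E.map (Polynomial.aeval (X 0 + X 1 : MvPolynomial (Fin 2) (WittVector p k))) =
        E.map (Polynomial.aeval (X 0 : MvPolynomial (Fin 2) (WittVector p k))) *
          E.map (Polynomial.aeval (X 1 : MvPolynomial (Fin 2) (WittVector p k))) ∧
      -- (iii) `E(p^e) = v·u·v⁻¹`
      E.map (Polynomial.eval ((p : WittVector p k) ^ e)) =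
        (v : Matrix (Fin N) (Fin N) (WittVector p k)) * u *
          ((v⁻¹ : (Matrix (Fin N) (Fin N) (WittVector p k))ˣ) :
            Matrix (Fin N) (Fin N) (WittVector p k)) ∧
      -- (iv) `E ≡ [[1₂ + t·ν₂, *],[0, *]]` mod `p`
      E ⟨0, by omega⟩ ⟨0, by omega⟩ - 1 ∈
        Ideal.span {(p : Polynomial (WittVector p k))} ∧
      E ⟨1, by omega⟩ ⟨1, by omega⟩ - 1 ∈
        Ideal.span {(p : Polynomial (WittVector p k))} ∧
      E ⟨1, by omega⟩ ⟨0, by omega⟩ ∈ Ideal.span {(p : Polynomial (WittVector p k))} ∧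
      E ⟨0, by omega⟩ ⟨1, by omega⟩ - Polynomial.X ∈
        Ideal.span {(p : Polynomial (WittVector p k))} ∧
      (∀ i : Fin N, 2 ≤ (i : ℕ) →
        E i ⟨0, by omega⟩ ∈ Ideal.span {(p : Polynomial (WittVector p k))} ∧
        E i ⟨1, by omega⟩ ∈ Ideal.span {(p : Polynomial (WittVector p k))}) := by
  have hp : p.Prime := Fact.out
  have hfac : ∀ m < p, IsUnit (m.factorial : WittVector p k) :=
    fun m hm ↦ WittVector.isUnit_factorial hm
  obtain ⟨X, hXp, hXu⟩ := exists_aeval_truncatedExp_eq (R := WittVector p k) hp.two_le hup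
  rw [add_sub_cancel] at hXu
  have hX : X ≠ 0 := by
    rintro rfl
    apply hu
    rw [← hXu, ← Polynomial.coeff_zero_eq_aeval_zero', coeff_truncatedExp, if_pos hp.pos]
    simp
  obtain ⟨e, Z, hXZ, hZ⟩ := WittVector.exists_matrix_eq_pow_smul hX
  have hZp : Z ^ p = 0 := by
    rw [hXZ, smul_pow] at hXp
    exact (smul_eq_zero.mp hXp).resolve_left
      (pow_ne_zero _ (pow_ne_zero _ (WittVector.irreducible p).ne_zero))
  obtain ⟨g, hg, hg₀, hg₁⟩ := Matrix.exists_isUnit_conj_mulVec_single hN hZ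
    ⟨p, by rw [← RingHom.mapMatrix_apply, ← map_pow, hZp, map_zero]⟩
  obtain ⟨w, rfl⟩ := WittVector.exists_isUnit_matrix_map_eq (p := p) hg
  let e₀ : Fin N → k := Pi.single ⟨0, by omega⟩ 1
  let e₁ : Fin N → k := Pi.single ⟨1, by omega⟩ 1
  change _ *ᵥ (_ *ᵥ e₀) = 0 at hg₀
  change _ *ᵥ (_ *ᵥ e₁) = _ *ᵥ e₀ at hg₁
  let W : Matrix (Fin N) (Fin N) (WittVector p k) := w
  let W' : Matrix (Fin N) (Fin N) (WittVector p k) := ↑w⁻¹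
  let Y : Matrix (Fin N) (Fin N) (WittVector p k) := W' * Z * W
  let Q := WittVector.constantCoeff.mapMatrix Y
  have hY : Y ^ p = 0 := by
    simp only [Y, W, W', Units.conj_pow', hZp, mul_zero, zero_mul]
  have hwinv (x) : WittVector.constantCoeff.mapMatrix W' *ᵥ
      (WittVector.constantCoeff.mapMatrix W *ᵥ x) = x := by
    rw [Matrix.mulVec_mulVec, ← map_mul, Units.inv_mul, map_one, Matrix.one_mulVec]
  have hQ (x) : Q *ᵥ x = WittVector.constantCoeff.mapMatrix W' *ᵥ
      (Z.map WittVector.constantCoeff *ᵥ (WittVector.constantCoeff.mapMatrix W *ᵥ x)) := by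
    simp only [Q, Y, map_mul, Matrix.mulVec_mulVec, RingHom.mapMatrix_apply, mul_assoc]
  have hQ₀ : Q *ᵥ e₀ = 0 := by rw [hQ, hg₀, Matrix.mulVec_zero]
  have hQ₁ : Q *ᵥ e₁ = e₀ := by rw [hQ, hg₁, hwinv]
  have hQpow₀ (m) : Q ^ (m + 1) *ᵥ e₀ = 0 := by
    rw [pow_succ, ← Matrix.mulVec_mulVec, hQ₀, Matrix.mulVec_zero]
  have hQpow₁ (m) : Q ^ (m + 2) *ᵥ e₁ = 0 := by
    rw [pow_succ, ← Matrix.mulVec_mulVec, hQ₁, hQpow₀]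
  have hcoeff (i j m) : WittVector.constantCoeff
      ((expMatrix p Y (Polynomial.X : Polynomial (WittVector p k)) i j).coeff m) =
      if m < p then WittVector.constantCoeff (Ring.inverse (m.factorial : WittVector p k)) *
        (Q ^ m *ᵥ Pi.single j 1) i else 0 := by
    rw [coeff_expMatrix_X, apply_ite WittVector.constantCoeff, map_mul, map_zero]
    simp only [Q, ← map_pow, Matrix.mulVec_single_one]
    rfl
  have hE₀ (i m) : WittVector.constantCoeff ((expMatrix p Y
      (Polynomial.X : Polynomial (WittVector p k)) i ⟨0, by omega⟩).coeff m) =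
      if m = 0 then e₀ i else 0 := by
    rw [hcoeff]
    obtain _ | m := m
    · rw [pow_zero, Matrix.one_mulVec]
      simp [e₀, hp.pos]
    · rw [hQpow₀]
      simp
  have hE₁ (i m) : WittVector.constantCoeff ((expMatrix p Y
      (Polynomial.X : Polynomial (WittVector p k)) i ⟨1, by omega⟩).coeff m) =
      if m = 0 then e₁ i else
      if m = 1 then e₀ i else 0 := by
    rw [hcoeff]
    obtain _ | _ | m := m
    · rw [pow_zero, Matrix.one_mulVec]
      simp [e₁, hp.pos]
    · rw [zero_add, pow_one, hQ₁]
      simp [hp.one_lt]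
    · rw [hQpow₁]
      simp
  refine ⟨e, w⁻¹, expMatrix p Y Polynomial.X, ?_, ?_, ?_, ?_, ?_, ?_, ?_, fun i hi ↦ ⟨?_, ?_⟩⟩
  · rw [← Polynomial.coe_aeval_eq_eval, expMatrix_map, Polynomial.aeval_X, expMatrix_zero hp.pos]
  · simp only [expMatrix_map, Polynomial.aeval_X, expMatrix_add hfac hY]
  · rw [← Polynomial.coe_aeval_eq_eval, expMatrix_map, Polynomial.aeval_X, ← hXu,
      ← aeval_units_conj, expMatrix, hXZ]
    congr 2
    simp only [Y, inv_inv, mul_smul_comm, smul_mul_assoc]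
    rfl
  all_goals
    rw [WittVector.polynomial_mem_span_p_iff]
    intro m
  · rw [Polynomial.coeff_sub, map_sub, hE₀, Polynomial.coeff_one]
    split_ifs <;> simp [e₀]
  · rw [Polynomial.coeff_sub, map_sub, hE₁, Polynomial.coeff_one]
    split_ifs <;> simp [e₀, e₁]
  · rw [hE₀]
    simp [e₀]
  · rw [Polynomial.coeff_sub, map_sub, hE₁, Polynomial.coeff_X]
    split_ifs <;> first | omega | simp [e₀, e₁]
  · have hi₀ : i ≠ ⟨0, by omega⟩ := Fin.ne_of_val_ne (by simp only; omega)
    simp [hE₀, e₀, -WittVector.constantCoeff_apply, hi₀]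
  · have hi₀ : i ≠ ⟨0, by omega⟩ := Fin.ne_of_val_ne (by simp only; omega)
    have hi₁ : i ≠ ⟨1, by omega⟩ := Fin.ne_of_val_ne (by simp only; omega)
    simp [hE₁, e₀, e₁, -WittVector.constantCoeff_apply, hi₀, hi₁]
end
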